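/- Let K be a field, let q ∈ K be nonzero, let R be an associative unital K-algebra, let F, Y ∈ R, set Z := F·Y − q⁻²·(Y·F), and suppose Z·F = F·Z and Z·Y = Y·Z. Let M be a left R-module and v ∈ M. Suppose there exist y₀, z₀, f₀ ∈ ℤ≥0 such that: Y^y·v = 0 for all y > y₀; Z^z·Y^y·v = 0 for all y ≥ 0 and all z > z₀; and F^f·Z^z·Y^y·v = 0 for all z, y ≥ 0 and all f > f₀. Then (F + Y)ⁿ·v = 0 for all n > f₀ + 2z₀ + y₀. -/

import Mathlib

/-!
Solving for `Y * F` gives `Y * F = s • (F * Y) + t • Z` with scalars `s` and `t`. Give `F` and `Y`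
weight `1` and `Z` weight `2`: the relation is then homogeneous and moves every `Y` to the right of
every `F`, so `(F + Y) ^ n` is a combination of the ordered monomials `F ^ a * Z ^ b * Y ^ c` with
`a + 2 * b + c = n`. When `n > f₀ + 2 * z₀ + y₀`, each of them has `c > y₀`, `b > z₀` or `a > f₀`.
-/

section OrderedMonomials

variable {k R : Type*} [CommSemiring k] [Semiring R] [Algebra k R] {F Z Y : R} {s t : k} {n : ℕ}

theorem mul_pow_succ_eq_of_mul_eq (hYF : Y * F = s • (F * Y) + t • Z) (hZF : Commute Z F) (a : ℕ) :
    Y * F ^ (a + 1) =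
      s ^ (a + 1) • (F ^ (a + 1) * Y) + (t * ∑ i ∈ Finset.range (a + 1), s ^ i) • (F ^ a * Z) := by
  induction a with
  | zero => simpa using hYF
  | succ a ih =>
    set g := ∑ i ∈ Finset.range (a + 1), s ^ i
    have push_Y : F ^ (a + 1) * Y * F = s • (F ^ (a + 2) * Y) + t • (F ^ (a + 1) * Z) := by
      rw [mul_assoc, hYF, mul_add, mul_smul_comm, mul_smul_comm, ← mul_assoc, ← pow_succ]
    have push_Z : F ^ a * Z * F = F ^ (a + 1) * Z := by
      rw [mul_assoc, hZF.eq, ← mul_assoc, ← pow_succ]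
    calc Y * F ^ (a + 2)
        = s ^ (a + 1) • (F ^ (a + 1) * Y * F) + (t * g) • (F ^ a * Z * F) := by
          rw [pow_succ, ← mul_assoc, ih, add_mul, smul_mul_assoc, smul_mul_assoc]
      _ = s ^ (a + 2) • (F ^ (a + 2) * Y) + (t * (g + s ^ (a + 1))) • (F ^ (a + 1) * Z) := by
          rw [push_Y, push_Z]
          module
      _ = _ := by rw [Finset.sum_range_succ _ (a + 1)]

variable (k F Z Y n) in
/-- The `k`-span of the ordered monomials in `F`, `Z`, `Y` of total weight `n`, where `F` and `Y`
have weight `1` and `Z`, being quadratic in `F` and `Y`, has weight `2`. -/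
def orderedMonomialSpan : Submodule k R :=
  Submodule.span k {x | ∃ a b c : ℕ, a + 2 * b + c = n ∧ F ^ a * Z ^ b * Y ^ c = x}

theorem monomial_mem_orderedMonomialSpan {a b c : ℕ} (h : a + 2 * b + c = n) :
    F ^ a * Z ^ b * Y ^ c ∈ orderedMonomialSpan k F Z Y n :=
  Submodule.subset_span ⟨a, b, c, h, rfl⟩

theorem orderedMonomialSpan_le {P : Submodule k R} :
    orderedMonomialSpan k F Z Y n ≤ P ↔
      ∀ a b c : ℕ, a + 2 * b + c = n → F ^ a * Z ^ b * Y ^ c ∈ P := by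
  rw [orderedMonomialSpan, Submodule.span_le]
  exact ⟨fun h a b c habc ↦ h ⟨a, b, c, habc, rfl⟩,
    fun h _ ⟨a, b, c, habc, hx⟩ ↦ hx ▸ h a b c habc⟩

theorem first_mul_mem_orderedMonomialSpan {x : R} (hx : x ∈ orderedMonomialSpan k F Z Y n) :
    F * x ∈ orderedMonomialSpan k F Z Y (n + 1) := by
  suffices h : orderedMonomialSpan k F Z Y n ≤
      (orderedMonomialSpan k F Z Y (n + 1)).comap (LinearMap.mulLeft k F) from h hx
  refine orderedMonomialSpan_le.2 fun a b c habc ↦ ?_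
  rw [Submodule.mem_comap, LinearMap.mulLeft_apply, ← mul_assoc, ← mul_assoc, ← pow_succ']
  exact monomial_mem_orderedMonomialSpan (by omega)

theorem last_mul_monomial_mem_orderedMonomialSpan (hYF : Y * F = s • (F * Y) + t • Z)
    (hZF : Commute Z F) (hZY : Commute Z Y) {a b c : ℕ} (h : a + 2 * b + c = n) :
    Y * (F ^ a * Z ^ b * Y ^ c) ∈ orderedMonomialSpan k F Z Y (n + 1) := by
  have push_Y (a : ℕ) : F ^ a * Y * Z ^ b * Y ^ c = F ^ a * Z ^ b * Y ^ (c + 1) := by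
    rw [mul_assoc (F ^ a), ← (hZY.pow_left b).eq, ← mul_assoc, mul_assoc _ Y, ← pow_succ']
  cases a with
  | zero =>
    have expand : Y * (F ^ 0 * Z ^ b * Y ^ c) = F ^ 0 * Z ^ b * Y ^ (c + 1) := by
      simpa [mul_assoc] using push_Y 0
    rw [expand]
    exact monomial_mem_orderedMonomialSpan (by omega)
  | succ a =>
    have expand : Y * (F ^ (a + 1) * Z ^ b * Y ^ c) =
        s ^ (a + 1) • (F ^ (a + 1) * Z ^ b * Y ^ (c + 1)) +
          (t * ∑ i ∈ Finset.range (a + 1), s ^ i) • (F ^ a * Z ^ (b + 1) * Y ^ c) := by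
      rw [← mul_assoc, ← mul_assoc, mul_pow_succ_eq_of_mul_eq hYF hZF, ← push_Y, pow_succ' Z]
      simp only [add_mul, smul_mul_assoc, mul_assoc]
    rw [expand]
    exact add_mem (Submodule.smul_mem _ _ (monomial_mem_orderedMonomialSpan (by omega)))
      (Submodule.smul_mem _ _ (monomial_mem_orderedMonomialSpan (by omega)))

theorem last_mul_mem_orderedMonomialSpan (hYF : Y * F = s • (F * Y) + t • Z)
    (hZF : Commute Z F) (hZY : Commute Z Y) {x : R} (hx : x ∈ orderedMonomialSpan k F Z Y n) :
    Y * x ∈ orderedMonomialSpan k F Z Y (n + 1) := by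
  suffices h : orderedMonomialSpan k F Z Y n ≤
      (orderedMonomialSpan k F Z Y (n + 1)).comap (LinearMap.mulLeft k Y) from h hx
  exact orderedMonomialSpan_le.2 fun a b c habc ↦
    last_mul_monomial_mem_orderedMonomialSpan hYF hZF hZY habc

theorem add_pow_mem_orderedMonomialSpan (hYF : Y * F = s • (F * Y) + t • Z)
    (hZF : Commute Z F) (hZY : Commute Z Y) (n : ℕ) :
    (F + Y) ^ n ∈ orderedMonomialSpan k F Z Y n := by
  induction n with
  | zero =>
    simpa using monomial_mem_orderedMonomialSpan (k := k) (F := F) (Z := Z) (Y := Y)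
      (show 0 + 2 * 0 + 0 = 0 from rfl)
  | succ n ih =>
    rw [pow_succ', add_mul]
    exact add_mem (first_mul_mem_orderedMonomialSpan ih)
      (last_mul_mem_orderedMonomialSpan hYF hZF hZY ih)

theorem smul_eq_zero_of_mem_orderedMonomialSpan {M : Type*} [AddCommMonoid M] [Module R M] {v : M}
    {x : R} (hx : x ∈ orderedMonomialSpan k F Z Y n)
    (h : ∀ a b c : ℕ, a + 2 * b + c = n → (F ^ a * Z ^ b * Y ^ c) • v = 0) : x • v = 0 := by
  suffices hle : orderedMonomialSpan k F Z Y n ≤ (Ideal.torsionOf R M v).restrictScalars k from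
    (Ideal.mem_torsionOf_iff v x).1 (hle hx)
  exact orderedMonomialSpan_le.2 h

end OrderedMonomials

theorem stmt_9_general {k R M : Type*} [CommSemiring k] [Semiring R] [Algebra k R]
    [AddCommMonoid M] [Module R M] {F Y Z : R} {s t : k}
    (hYF : Y * F = s • (F * Y) + t • Z) (hZF : Commute Z F) (hZY : Commute Z Y)
    {v : M} {y₀ z₀ f₀ : ℕ}
    (hY : ∀ y : ℕ, y₀ < y → Y ^ y • v = 0)
    (hZv : ∀ z y : ℕ, z₀ < z → (Z ^ z * Y ^ y) • v = 0)
    (hF : ∀ f z y : ℕ, f₀ < f → (F ^ f * Z ^ z * Y ^ y) • v = 0)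
    {n : ℕ} (hn : f₀ + 2 * z₀ + y₀ < n) : (F + Y) ^ n • v = 0 := by
  refine smul_eq_zero_of_mem_orderedMonomialSpan
    (add_pow_mem_orderedMonomialSpan hYF hZF hZY n) fun a b c habc ↦ ?_
  obtain hc | hb | ha : y₀ < c ∨ z₀ < b ∨ f₀ < a := by omega
  · rw [mul_smul, hY c hc, smul_zero]
  · rw [mul_assoc, mul_smul, hZv b c hb, smul_zero]
  · exact hF a b c ha

theorem mul_eq_of_eq_sub_inv_sq_smul {K R : Type*} [Field K] [Ring R] [Algebra K R] {q : K}
    (hq : q ≠ 0) {F Y Z : R} (hZ : Z = F * Y - (q⁻¹) ^ 2 • (Y * F)) :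
    Y * F = q ^ 2 • (F * Y) + (-q ^ 2) • Z := by
  have hq2 : q ^ 2 * (q⁻¹) ^ 2 = 1 := by field_simp
  rw [hZ, smul_sub, smul_smul, neg_mul, hq2]
  module

/-- If `Z := F * Y - q⁻² • (Y * F)` commutes with both `F` and `Y`, `M` is a left
`R`-module, and `v ∈ M` satisfies the stated local nilpotency bounds with respect to
`Y`, `Z`, `F`, then `(F + Y) ^ n • v = 0` for all `n > f₀ + 2z₀ + y₀`. -/
theorem stmt_9 {K : Type*} [Field K] (q : K) (hq : q ≠ 0)
    {R : Type*} [Ring R] [Algebra K R] (F Y Z : R)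
    (hZ : Z = F * Y - (q⁻¹) ^ 2 • (Y * F))
    (hZF : Z * F = F * Z) (hZY : Z * Y = Y * Z)
    {M : Type*} [AddCommGroup M] [Module R M] (v : M) (y₀ z₀ f₀ : ℕ)
    (hY : ∀ y : ℕ, y₀ < y → Y ^ y • v = 0)
    (hZv : ∀ z y : ℕ, z₀ < z → (Z ^ z * Y ^ y) • v = 0)
    (hF : ∀ f z y : ℕ, f₀ < f → (F ^ f * Z ^ z * Y ^ y) • v = 0) :
    ∀ n : ℕ, f₀ + 2 * z₀ + y₀ < n → (F + Y) ^ n • v = 0 :=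
  fun _ hn ↦ stmt_9_general (mul_eq_of_eq_sub_inv_sq_smul hq hZ) hZF hZY hY hZv hF hn
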